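/- Let X be a normed space, f : X → ℝ ∪ {−∞, +∞}, u ∈ X with f(u) ∈ ℝ, and g : X → ℝ Lipschitz continuous. Then ∂(f+g)(u) ⊆ ∂f(u) + ∂g(u). If moreover g is of class C¹, then ∂(f+g)(u) = ∂f(u) + ∂g(u) and ∂g(u) = {g'(u)}. -/

import Mathlib

open Set ENNReal Pointwise

noncomputable section

/-- Ball-intersect-epigraph of `f` around `(u, c)` of radius `σ`, in the metric
`dist((w,μ),(w',μ')) = sqrt(dist(w,w')² + (μ-μ')²)` on `E × ℝ`. -/
def epiBallM {E : Type*} [MetricSpace E] (f : E → EReal) (u : E) (c σ : ℝ) : Set (E × ℝ) :=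
  {w | Real.sqrt ((dist w.1 u) ^ 2 + (w.2 - c) ^ 2) < σ ∧ f w.1 ≤ (w.2 : EReal)}

/-- `u` (with `f u = c ∈ ℝ`) is `δ`-regular for `f`. -/
def IsDeltaRegular {E : Type*} [MetricSpace E] (f : E → EReal) (u : E) (c : ℝ) (δ : ℝ) : Prop :=
  ∃ σ > 0, ∃ ν : E × ℝ → ℝ → E,
    ContinuousOn (fun z : (E × ℝ) × ℝ => ν z.1 z.2) (epiBallM f u c σ ×ˢ Icc 0 σ) ∧
    ∀ w ∈ epiBallM f u c σ, ∀ t ∈ Icc (0:ℝ) σ,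
      dist (ν w t) w.1 ≤ t ∧ f (ν w t) ≤ ((w.2 - δ * t : ℝ) : EReal)

/-- The weak slope `|df|(u)`, an element of `[0,∞]`. -/
def weakSlope {E : Type*} [MetricSpace E] (f : E → EReal) (u : E) (c : ℝ) : ℝ≥0∞ :=
  sSup {d : ℝ≥0∞ | ∃ δ : ℝ, 0 < δ ∧ IsDeltaRegular f u c δ ∧ d = ENNReal.ofReal δ}

variable {X : Type*} [NormedAddCommGroup X] [NormedSpace ℝ X]

/-- The set of `r ∈ ℝ` entering the definition of `f⁰_ε(u;v)`. -/
def gdirSetN (f : X → EReal) (u : X) (c : ℝ) (v : X) (ε : ℝ) : Set ℝ :=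
  {r | ∃ δ > 0, ∃ ν : X × ℝ → ℝ → X,
    ContinuousOn (fun z : (X × ℝ) × ℝ => ν z.1 z.2) (epiBallM f u c δ ×ˢ Ioc 0 δ) ∧
    ∀ w ∈ epiBallM f u c δ, ∀ t ∈ Ioc (0:ℝ) δ,
      ‖ν w t - v‖ < ε ∧ f (w.1 + t • ν w t) ≤ ((w.2 + r * t : ℝ) : EReal)}

/-- `f⁰_ε(u;v)`. -/
def gdirEps (f : X → EReal) (u : X) (c : ℝ) (v : X) (ε : ℝ) : EReal :=
  sInf ((fun r : ℝ => (r : EReal)) '' gdirSetN f u c v ε)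

/-- `f⁰(u;v) = sup_{ε>0} f⁰_ε(u;v)`. -/
def gdir (f : X → EReal) (u : X) (c : ℝ) (v : X) : EReal :=
  ⨆ ε : {e : ℝ // 0 < e}, gdirEps f u c v ε.1

/-- The Campa–Degiovanni subdifferential `∂f(u)`. -/
def subdiff (f : X → EReal) (u : X) (c : ℝ) : Set (X →L[ℝ] ℝ) :=
  {α | ∀ v : X, ((α v : ℝ) : EReal) ≤ gdir f u c v}

/-- real-number form of `gdir f u c v ≤ r` -/
def InP (f : X → EReal) (u : X) (c : ℝ) (v : X) (r : ℝ) : Prop :=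
  ∀ ε > 0, ∀ r' > r, r' ∈ gdirSetN f u c v ε

theorem gdirSetN_up {f : X → EReal} {u : X} {c : ℝ} {v : X} {ε r r' : ℝ} (h : r ≤ r')
    (hr : r ∈ gdirSetN f u c v ε) : r' ∈ gdirSetN f u c v ε := by
  obtain ⟨δ, hδ, ν, hν, H⟩ := hr
  refine ⟨δ, hδ, ν, hν, fun w hw t ht => ⟨(H w hw t ht).1, (H w hw t ht).2.trans ?_⟩⟩
  have := mul_le_mul_of_nonneg_right h ht.1.le
  exact_mod_cast (by linarith : w.2 + r * t ≤ w.2 + r' * t)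

theorem gdir_le_iff {f : X → EReal} {u : X} {c : ℝ} {v : X} {r : ℝ} :
    gdir f u c v ≤ (r : EReal) ↔ InP f u c v r := by
  unfold gdir gdirEps InP
  rw [iSup_le_iff]
  constructor
  · intro h ε hε r' hr'
    have h1 := lt_of_le_of_lt (h ⟨ε, hε⟩) (EReal.coe_lt_coe_iff.2 hr')
    obtain ⟨a, ⟨q, hq, rfl⟩, ha⟩ := sInf_lt_iff.1 h1
    exact gdirSetN_up (EReal.coe_lt_coe_iff.1 ha).le hq
  · rintro h ⟨ε, hε⟩
    refine le_of_forall_gt fun b hb => ?_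
    obtain ⟨q, hq1, hq2⟩ := EReal.lt_iff_exists_real_btwn.1 hb
    exact lt_of_le_of_lt (sInf_le ⟨q, h ε hε q (EReal.coe_lt_coe_iff.1 hq1), rfl⟩) hq2

theorem mem_subdiff_iff {f : X → EReal} {u : X} {c : ℝ} {α : X →L[ℝ] ℝ} :
    α ∈ subdiff f u c ↔ ∀ v r, InP f u c v r → α v ≤ r := by
  constructor
  · intro h v r hr
    exact EReal.coe_le_coe_iff.1 ((h v).trans (gdir_le_iff.2 hr))
  · intro h v
    by_contra hlt
    obtain ⟨q, hq1, hq2⟩ := EReal.lt_iff_exists_real_btwn.1 (not_le.1 hlt)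
    have := h v q (gdir_le_iff.1 hq1.le)
    exact absurd (EReal.coe_lt_coe_iff.1 hq2) (not_lt.2 this)

theorem epiBallM_bounds {f : X → EReal} {u : X} {c σ : ℝ} {w : X × ℝ}
    (hw : w ∈ epiBallM f u c σ) : ‖w.1 - u‖ < σ ∧ |w.2 - c| < σ := by
  have h := hw.1
  rw [dist_eq_norm] at h
  constructor
  · refine lt_of_le_of_lt ?_ h
    exact Real.le_sqrt_of_sq_le (by nlinarith [sq_nonneg (w.2 - c)])
  · refine lt_of_le_of_lt ?_ h
    refine Real.le_sqrt_of_sq_le ?_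
    rw [sq_abs]
    nlinarith [sq_nonneg ‖w.1 - u‖]

theorem epiBallM_of_bounds {f : X → EReal} {u : X} {c σ : ℝ} {w : X × ℝ} (hσ : 0 < σ)
    (h1 : ‖w.1 - u‖ < σ / 2) (h2 : |w.2 - c| < σ / 2) (hf : f w.1 ≤ (w.2 : EReal)) :
    w ∈ epiBallM f u c σ := by
  refine ⟨?_, hf⟩
  rw [dist_eq_norm, Real.sqrt_lt' hσ, ← sq_abs (w.2 - c)]
  nlinarith [norm_nonneg (w.1 - u), abs_nonneg (w.2 - c)]

theorem epiBallM_mono {f : X → EReal} {u : X} {c σ σ' : ℝ} (h : σ ≤ σ') :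
    epiBallM f u c σ ⊆ epiBallM f u c σ' := fun _ hw => ⟨hw.1.trans_le h, hw.2⟩

theorem InP.zero (f : X → EReal) (u : X) (c : ℝ) : InP f u c 0 0 := by
  intro ε hε r' hr'
  refine ⟨1, one_pos, fun _ _ => 0, continuousOn_const, fun w hw t ht => ⟨by simpa using hε, ?_⟩⟩
  simp only [smul_zero, add_zero]
  refine hw.2.trans ?_
  have := mul_pos hr' ht.1
  exact_mod_cast (by linarith : w.2 ≤ w.2 + r' * t)

theorem InP.smul {f : X → EReal} {u : X} {c : ℝ} {v : X} {r s : ℝ} (hs : 0 < s)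
    (h : InP f u c v r) : InP f u c (s • v) (s * r) := by
  intro ε hε r' hr'
  obtain ⟨δ, hδ, ν, hν, H⟩ := h (ε / s) (by positivity) (r' / s)
    (by rw [gt_iff_lt, lt_div_iff₀ hs]; linarith)
  have key : ∀ t ∈ Ioc (0:ℝ) (min δ (δ / s)), s * t ∈ Ioc (0:ℝ) δ := by
    intro t ht
    refine ⟨mul_pos hs ht.1, ?_⟩
    have := ht.2.trans (min_le_right _ _)
    rw [le_div_iff₀ hs] at this
    linarith
  refine ⟨min δ (δ / s), by positivity, fun w t => s • ν w (s * t), ?_, ?_⟩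
  · refine ContinuousOn.const_smul ?_ s
    refine hν.comp (f := fun z : (X × ℝ) × ℝ => (z.1, s * z.2)) (by fun_prop) ?_
    rintro ⟨w, t⟩ ⟨hw, ht⟩
    exact ⟨epiBallM_mono (min_le_left _ _) hw, key t ht⟩
  · intro w hw t ht
    obtain ⟨h1, h2⟩ := H w (epiBallM_mono (min_le_left _ _) hw) (s * t) (key t ht)
    constructor
    · rw [← smul_sub, norm_smul, Real.norm_of_nonneg hs.le]
      rw [lt_div_iff₀ hs] at h1
      linarith
    · have e1 : w.1 + t • s • ν w (s * t) = w.1 + (s * t) • ν w (s * t) := by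
        rw [smul_smul, mul_comm]
      have e2 : w.2 + r' * t = w.2 + r' / s * (s * t) := by field_simp
      simp only [e1, e2]
      exact h2

theorem InP.add {f : X → EReal} {u : X} {c : ℝ} {v₁ v₂ : X} {r₁ r₂ : ℝ}
    (h1 : InP f u c v₁ r₁) (h2 : InP f u c v₂ r₂) : InP f u c (v₁ + v₂) (r₁ + r₂) := by
  intro ε hε r' hr'
  obtain ⟨R₁, hR₁⟩ : ∃ R, R = r₁ + (r' - r₁ - r₂) / 2 := ⟨_, rfl⟩
  obtain ⟨R₂, hR₂⟩ : ∃ R, R = r₂ + (r' - r₁ - r₂) / 2 := ⟨_, rfl⟩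
  have hR : r' = R₁ + R₂ := by rw [hR₁, hR₂]; ring
  obtain ⟨δ₁, hδ₁, ν₁, hν₁, H₁⟩ := h1 (ε / 2) (by positivity) R₁ (by linarith)
  obtain ⟨δ₂, hδ₂, ν₂, hν₂, H₂⟩ := h2 (ε / 2) (by positivity) R₂ (by linarith)
  obtain ⟨M, hM⟩ : ∃ M, M = 1 + ‖v₁‖ + ε + |R₁| := ⟨_, rfl⟩
  have hMp : 0 < M := by rw [hM]; positivity
  obtain ⟨δ, hδ⟩ : ∃ δ, δ = min δ₁ (min δ₂ (δ₂ / 2 / M)) := ⟨_, rfl⟩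
  have hδp : 0 < δ := by rw [hδ]; positivity
  have hd1 : δ ≤ δ₁ := by rw [hδ]; exact min_le_left _ _
  have hd2 : δ ≤ δ₂ := by rw [hδ]; exact (min_le_right _ _).trans (min_le_left _ _)
  have hd3 : δ * M ≤ δ₂ / 2 := by
    rw [← le_div_iff₀ hMp, hδ]; exact (min_le_right _ _).trans (min_le_right _ _)
  have key : ∀ w ∈ epiBallM f u c δ, ∀ t ∈ Ioc (0:ℝ) δ,
      (w.1 + t • ν₁ w t, w.2 + R₁ * t) ∈ epiBallM f u c δ₂ := by
    intro w hw t ht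
    obtain ⟨b1, b2⟩ := epiBallM_bounds hw
    obtain ⟨a1, a2⟩ := H₁ w (epiBallM_mono hd1 hw) t ⟨ht.1, ht.2.trans hd1⟩
    have n1 : ‖ν₁ w t‖ ≤ ‖v₁‖ + ε := by
      have := norm_add_le (ν₁ w t - v₁) v₁
      rw [sub_add_cancel] at this
      linarith
    refine epiBallM_of_bounds hδ₂ ?_ ?_ a2
    · have e : w.1 + t • ν₁ w t - u = (w.1 - u) + t • ν₁ w t := by abel
      simp only [e]
      have := norm_add_le (w.1 - u) (t • ν₁ w t)
      rw [norm_smul, Real.norm_of_nonneg ht.1.le] at this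
      have h3 : t * ‖ν₁ w t‖ ≤ δ * (‖v₁‖ + ε) :=
        mul_le_mul ht.2 n1 (norm_nonneg _) hδp.le
      have h4 : 0 ≤ δ * |R₁| := by positivity
      rw [hM] at hd3
      nlinarith
    · have e : w.2 + R₁ * t - c = (w.2 - c) + t * R₁ := by ring
      simp only [e]
      have := abs_add_le (w.2 - c) (t * R₁)
      rw [abs_mul, abs_of_pos ht.1] at this
      have h3 : t * |R₁| ≤ δ * |R₁| := mul_le_mul_of_nonneg_right ht.2 (abs_nonneg _)
      have h4 : 0 ≤ δ * (‖v₁‖ + ε) := by positivity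
      rw [hM] at hd3
      nlinarith
  have c1 : ContinuousOn (fun z : (X × ℝ) × ℝ => ν₁ z.1 z.2)
      (epiBallM f u c δ ×ˢ Ioc 0 δ) :=
    hν₁.mono (prod_mono (epiBallM_mono hd1) (Ioc_subset_Ioc_right hd1))
  refine ⟨δ, hδp, fun w t => ν₁ w t + ν₂ (w.1 + t • ν₁ w t, w.2 + R₁ * t) t, ?_, ?_⟩
  · refine c1.add ?_
    refine hν₂.comp (f := fun z : (X × ℝ) × ℝ =>
      ((z.1.1 + z.2 • ν₁ z.1 z.2, z.1.2 + R₁ * z.2), z.2)) ?_ ?_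
    · refine ContinuousOn.prodMk (ContinuousOn.prodMk ?_ (by fun_prop)) (by fun_prop)
      exact ContinuousOn.add (by fun_prop) (ContinuousOn.smul (by fun_prop) c1)
    · rintro ⟨w, t⟩ ⟨hw, ht⟩
      exact ⟨key w hw t ht, ht.1, ht.2.trans hd2⟩
  · intro w hw t ht
    obtain ⟨a1, a2⟩ := H₁ w (epiBallM_mono hd1 hw) t ⟨ht.1, ht.2.trans hd1⟩
    obtain ⟨b1, b2⟩ := H₂ _ (key w hw t ht) t ⟨ht.1, ht.2.trans hd2⟩
    constructor
    · have := norm_add_le (ν₁ w t - v₁) (ν₂ (w.1 + t • ν₁ w t, w.2 + R₁ * t) t - v₂)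
      rw [sub_add_sub_comm] at this
      linarith
    · have e2 : w.2 + r' * t = w.2 + R₁ * t + R₂ * t := by rw [hR]; ring
      simp only [e2, smul_add, ← add_assoc]
      exact b2

theorem InP.sum {f : X → EReal} {g : X → ℝ} {u : X} {c : ℝ} {K : NNReal}
    (hg : LipschitzWith K g) {v : X} {r s : ℝ}
    (h1 : InP f u c v r) (h2 : InP (fun x => ((g x : ℝ) : EReal)) u (g u) v s) :
    InP (fun x => f x + ((g x : ℝ) : EReal)) u (c + g u) v (r + s) := by
  have hL : ∀ x y, |g x - g y| ≤ K * ‖x - y‖ := fun x y => by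
    have := hg.dist_le_mul x y
    rwa [Real.dist_eq, dist_eq_norm] at this
  have hK : (0:ℝ) ≤ K := K.2
  intro ε hε r' hr'
  obtain ⟨η, hη⟩ : ∃ η, η = (r' - r - s) / 3 := ⟨_, rfl⟩
  have hηp : 0 < η := by linarith
  obtain ⟨e, he⟩ : ∃ e, e = min ε (η / (2 * (K + 1))) := ⟨_, rfl⟩
  have hep : 0 < e := by rw [he]; positivity
  have he1 : e ≤ ε := by rw [he]; exact min_le_left _ _
  have he2 : 2 * e * (K + 1) ≤ η := by
    have : e ≤ η / (2 * (K + 1)) := by rw [he]; exact min_le_right _ _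
    rw [le_div_iff₀ (by positivity)] at this
    linarith
  obtain ⟨δ₁, hδ₁, ν₁, hν₁, H₁⟩ := h1 e hep (r + η) (by linarith)
  obtain ⟨δ₂, hδ₂, ν₂, hν₂, H₂⟩ := h2 e hep (s + η) (by linarith)
  obtain ⟨δ, hδ⟩ : ∃ δ, δ = min (δ₁ / 2 / (K + 1)) (δ₂ / 2 / (K + 1)) := ⟨_, rfl⟩
  have hδp : 0 < δ := by rw [hδ]; positivity
  have hd1 : δ * (K + 1) ≤ δ₁ / 2 := by
    rw [← le_div_iff₀ (by positivity), hδ]; exact min_le_left _ _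
  have hd2 : δ * (K + 1) ≤ δ₂ / 2 := by
    rw [← le_div_iff₀ (by positivity), hδ]; exact min_le_right _ _
  have hδK : 0 ≤ δ * K := by positivity
  have key1 : ∀ w ∈ epiBallM (fun x => f x + ((g x : ℝ) : EReal)) u (c + g u) δ,
      (w.1, w.2 - g w.1) ∈ epiBallM f u c δ₁ := by
    intro w hw
    obtain ⟨b1, b2⟩ := epiBallM_bounds hw
    refine epiBallM_of_bounds hδ₁ ?_ ?_ ?_
    · change ‖w.1 - u‖ < _
      linarith
    · have e : w.2 - g w.1 - c = (w.2 - (c + g u)) - (g w.1 - g u) := by ring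
      simp only [e]
      have h3 := abs_sub (w.2 - (c + g u)) (g w.1 - g u)
      have h4 := hL w.1 u
      have h5 := mul_le_mul_of_nonneg_left b1.le hK
      linarith
    · have h3 := hw.2
      simp only at h3 ⊢
      rw [EReal.coe_sub]
      exact EReal.le_sub_iff_add_le (by simp) (by simp) |>.2 h3
  have key2 : ∀ w ∈ epiBallM (fun x => f x + ((g x : ℝ) : EReal)) u (c + g u) δ,
      (w.1, g w.1) ∈ epiBallM (fun x => ((g x : ℝ) : EReal)) u (g u) δ₂ := by
    intro w hw
    obtain ⟨b1, b2⟩ := epiBallM_bounds hw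
    refine epiBallM_of_bounds hδ₂ ?_ ?_ le_rfl
    · change ‖w.1 - u‖ < _
      linarith
    · change |g w.1 - g u| < _
      have h4 := hL w.1 u
      have h5 := mul_le_mul_of_nonneg_left b1.le hK
      linarith
  refine ⟨δ, hδp, fun w t => ν₁ (w.1, w.2 - g w.1) t, ?_, ?_⟩
  · have hgc := hg.continuous
    refine hν₁.comp (f := fun z : (X × ℝ) × ℝ => ((z.1.1, z.1.2 - g z.1.1), z.2))
      (by fun_prop) ?_
    rintro ⟨w, t⟩ ⟨hw, ht⟩
    exact ⟨key1 w hw, ht.1, ht.2.trans (by linarith)⟩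
  · intro w hw t ht
    obtain ⟨a1, a2⟩ := H₁ _ (key1 w hw) t ⟨ht.1, ht.2.trans (by linarith)⟩
    obtain ⟨b1, b2⟩ := H₂ _ (key2 w hw) t ⟨ht.1, ht.2.trans (by linarith)⟩
    refine ⟨a1.trans_le he1, ?_⟩
    beta_reduce
    generalize ν₁ (w.1, w.2 - g w.1) t = p at *
    generalize ν₂ (w.1, g w.1) t = q at *
    simp only at a2 b2 ⊢
    have b3 := EReal.coe_le_coe_iff.1 b2
    have h6 : ‖p - q‖ ≤ 2 * e := by
      have := norm_sub_le (p - v) (q - v)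
      rw [sub_sub_sub_cancel_right] at this
      linarith
    have h7 := (le_abs_self _).trans (hL (w.1 + t • p) (w.1 + t • q))
    rw [add_sub_add_left_eq_sub, ← smul_sub, norm_smul, Real.norm_of_nonneg ht.1.le] at h7
    have h8 : K * (t * ‖p - q‖) ≤ t * η := by
      calc K * (t * ‖p - q‖) = t * (‖p - q‖ * K) := by ring
        _ ≤ t * (2 * e * (K + 1)) := by
          refine mul_le_mul_of_nonneg_left ?_ ht.1.le
          exact mul_le_mul h6 (by linarith) hK (by linarith)
        _ ≤ t * η := mul_le_mul_of_nonneg_left he2 ht.1.le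
    have h9 : g (w.1 + t • p) ≤ g w.1 + (s + 2 * η) * t := by linarith
    have e2 : w.2 + r' * t = (w.2 - g w.1 + (r + η) * t) + (g w.1 + (s + 2 * η) * t) := by
      rw [show r' = r + s + 3 * η by rw [hη]; ring]; ring
    rw [e2, EReal.coe_add]
    exact add_le_add a2 (EReal.coe_le_coe_iff.2 h9)

theorem InP.lip {g : X → ℝ} {u : X} {K : NNReal} (hg : LipschitzWith K g) (v : X) :
    InP (fun x => ((g x : ℝ) : EReal)) u (g u) v (K * ‖v‖) := by
  intro ε hε r' hr'
  refine ⟨1, one_pos, fun _ _ => v, continuousOn_const, fun w hw t ht => ⟨by simpa using hε, ?_⟩⟩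
  have h1 := hg.dist_le_mul (w.1 + t • v) w.1
  rw [Real.dist_eq, dist_eq_norm, add_sub_cancel_left, norm_smul,
    Real.norm_of_nonneg ht.1.le] at h1
  have h2 := EReal.coe_le_coe_iff.1 hw.2
  have h3 := mul_le_mul_of_nonneg_right (le_of_lt hr') ht.1.le
  have h4 := le_abs_self (g (w.1 + t • v) - g w.1)
  exact EReal.coe_le_coe_iff.2 (by linarith)

theorem InP.c1 {g : X → ℝ} {u : X} {L : X →L[ℝ] ℝ} (hg : HasStrictFDerivAt g L u) (v : X) :
    InP (fun x => ((g x : ℝ) : EReal)) u (g u) v (L v) := by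
  intro ε hε r' hr'
  have hη : 0 < (r' - L v) / (‖v‖ + 1) := div_pos (by linarith) (by positivity)
  have h0 := hg.isLittleO.def hη
  rw [Metric.eventually_nhds_iff] at h0
  obtain ⟨ρ, hρ, h0⟩ := h0
  refine ⟨ρ / 2 / (‖v‖ + 1), by positivity, fun _ _ => v, continuousOn_const,
    fun w hw t ht => ⟨by simpa using hε, ?_⟩⟩
  obtain ⟨b1, -⟩ := epiBallM_bounds hw
  rw [lt_div_iff₀ (by positivity)] at b1
  have ht2 := ht.2
  rw [le_div_iff₀ (by positivity)] at ht2
  have ht0 := ht.1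
  have b1' : ‖w.1 - u‖ < ρ / 2 := by nlinarith [norm_nonneg v, norm_nonneg (w.1 - u)]
  have h1 := @h0 (w.1 + t • v, w.1) (by
    rw [Prod.dist_eq, max_lt_iff, dist_eq_norm, dist_eq_norm]
    constructor
    · have e : w.1 + t • v - u = (w.1 - u) + t • v := by abel
      simp only [e]
      have := norm_add_le (w.1 - u) (t • v)
      rw [norm_smul, Real.norm_of_nonneg ht.1.le] at this
      nlinarith
    · change ‖w.1 - u‖ < _
      linarith)
  simp only [add_sub_cancel_left, map_smul, smul_eq_mul, norm_smul, Real.norm_eq_abs,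
    abs_of_pos ht0] at h1
  have h2 := EReal.coe_le_coe_iff.1 hw.2
  have h4 := (le_abs_self _).trans h1
  have h5 : (r' - L v) / (‖v‖ + 1) * (t * ‖v‖) ≤ (r' - L v) * t := by
    calc (r' - L v) / (‖v‖ + 1) * (t * ‖v‖) ≤ (r' - L v) / (‖v‖ + 1) * (t * (‖v‖ + 1)) := by
          gcongr; linarith
      _ = (r' - L v) * t := by field_simp
  exact EReal.coe_le_coe_iff.2 (by linarith)

theorem le_of_InP {g : X → ℝ} {u : X} {L : X →L[ℝ] ℝ} {K : NNReal} (hL : LipschitzWith K g)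
    (hg : HasFDerivAt g L u) {v : X} {r : ℝ}
    (h : InP (fun x => ((g x : ℝ) : EReal)) u (g u) v r) : L v ≤ r := by
  refine le_of_forall_pos_le_add fun η hη => ?_
  have hK : (0:ℝ) ≤ K := K.2
  obtain ⟨δ, hδ, ν, -, H⟩ := h (η / 2 / (K + 1)) (by positivity) (r + η / 2) (by linarith)
  have hu : (u, g u) ∈ epiBallM (fun x => ((g x : ℝ) : EReal)) u (g u) δ :=
    epiBallM_of_bounds hδ (by simpa using hδ) (by simpa using hδ) le_rfl
  have hd : HasDerivAt (fun t : ℝ => g (u + t • v)) (L v) 0 := by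
    have h1 : HasDerivAt (fun t : ℝ => u + t • v) v 0 := by
      simpa using ((hasDerivAt_id (0:ℝ)).smul_const v).const_add u
    have h2 : HasFDerivAt g L (u + (0:ℝ) • v) := by simpa using hg
    exact h2.comp_hasDerivAt (0:ℝ) h1
  have hlim := hd.tendsto_slope_zero_right
  refine le_of_tendsto hlim ?_
  filter_upwards [Ioc_mem_nhdsGT hδ] with t ht
  obtain ⟨a1, a2⟩ := H _ hu t ht
  have a3 := EReal.coe_le_coe_iff.1 a2
  simp only at a3
  generalize ν (u, g u) t = p at *
  have h7 := hL.dist_le_mul (u + t • v) (u + t • p)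
  rw [Real.dist_eq, dist_eq_norm, add_sub_add_left_eq_sub, ← smul_sub, norm_smul,
    Real.norm_of_nonneg ht.1.le, norm_sub_rev] at h7
  have h8 := (le_abs_self _).trans h7
  rw [lt_div_iff₀ (by positivity)] at a1
  have h9 : K * (t * ‖p - v‖) ≤ t * (η / 2) := by
    rw [mul_left_comm]
    refine mul_le_mul_of_nonneg_left ?_ ht.1.le
    nlinarith [norm_nonneg (p - v)]
  simp only [zero_add, zero_smul, add_zero, smul_eq_mul]
  rw [inv_mul_le_iff₀ ht.1]
  linarith

/-- Sandwich via the Hahn Banach theorem. -/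
theorem sandwich {P Q : X → ℝ → Prop} (α : X →L[ℝ] ℝ) (K : ℝ) (P0 : P 0 0)
    (Padd : ∀ v w r s, P v r → P w s → P (v + w) (r + s))
    (Psmul : ∀ a v r, 0 < a → P v r → P (a • v) (a * r))
    (Qadd : ∀ v w r s, Q v r → Q w s → Q (v + w) (r + s))
    (Qsmul : ∀ a v r, 0 < a → Q v r → Q (a • v) (a * r))
    (QK : ∀ v, Q v (K * ‖v‖))
    (hα : ∀ v r s, P v r → Q v s → α v ≤ r + s) :
    ∃ β : X →L[ℝ] ℝ, (∀ v s, Q v s → β v ≤ s) ∧ (∀ v r, P v r → α v - β v ≤ r) := by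
  let S : X → Set ℝ := fun x => {a | ∃ v r s, P v r ∧ Q (x + v) s ∧ a = r + s - α v}
  have hne : ∀ x, (S x).Nonempty := fun x =>
    ⟨K * ‖x‖, 0, 0, K * ‖x‖, P0, by simpa using QK x, by simp⟩
  have hlb : ∀ x, ∀ a ∈ S x, -(K * ‖x‖) ≤ a := by
    rintro x a ⟨v, r, s, hP, hQ, rfl⟩
    have h1 := Qadd _ _ _ _ hQ (QK (-x))
    rw [norm_neg, show x + v + -x = v by abel] at h1
    have := hα _ _ _ hP h1
    linarith
  have hbdd : ∀ x, BddBelow (S x) := fun x => ⟨_, hlb x⟩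
  let N : X → ℝ := fun x => sInf (S x)
  have hN : ∀ x, ∀ a ∈ S x, N x ≤ a := fun x a ha => csInf_le (hbdd x) ha
  have hsm : ∀ b : ℝ, 0 < b → ∀ x, N (b • x) ≤ b * N x := by
    intro b hb x
    rw [← div_le_iff₀' hb]
    refine le_csInf (hne x) ?_
    rintro a ⟨v, r, s, hP, hQ, rfl⟩
    rw [div_le_iff₀' hb]
    refine hN _ _ ⟨b • v, b * r, b * s, Psmul _ _ _ hb hP, ?_, ?_⟩
    · rw [← smul_add]; exact Qsmul _ _ _ hb hQ
    · rw [map_smul, smul_eq_mul]; ring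
  have N_hom : ∀ b : ℝ, 0 < b → ∀ x, N (b • x) = b * N x := by
    intro b hb x
    refine le_antisymm (hsm b hb x) ?_
    have := hsm b⁻¹ (inv_pos.2 hb) (b • x)
    rw [smul_smul, inv_mul_cancel₀ hb.ne', one_smul] at this
    rwa [le_inv_mul_iff₀ hb] at this
  have N_add : ∀ x y, N (x + y) ≤ N x + N y := by
    intro x y
    rw [← sub_le_iff_le_add]
    refine le_csInf (hne x) ?_
    rintro a ⟨v, r, s, hP, hQ, rfl⟩
    rw [sub_le_comm]
    refine le_csInf (hne y) ?_
    rintro a ⟨v', r', s', hP', hQ', rfl⟩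
    rw [sub_le_iff_le_add]
    refine hN _ _ ⟨v' + v, r' + r, s' + s, Padd _ _ _ _ hP' hP, ?_, ?_⟩
    · have := Qadd _ _ _ _ hQ' hQ
      rwa [show y + v' + (x + v) = x + y + (v' + v) by abel] at this
    · rw [map_add]; ring
  have hN0 : 0 ≤ N 0 := le_csInf (hne 0) fun a ha => by simpa using hlb 0 a ha
  obtain ⟨β, -, hβ⟩ := exists_extension_of_le_sublinear (⟨⊥, 0⟩ : X →ₗ.[ℝ] ℝ) N N_hom N_add (by
    rintro ⟨x, hx⟩
    rw [Submodule.mem_bot] at hx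
    subst hx
    simpa using hN0)
  have hβK : ∀ x, β x ≤ K * ‖x‖ := fun x => (hβ x).trans
    (hN x _ ⟨0, 0, K * ‖x‖, P0, by simpa using QK x, by simp⟩)
  refine ⟨β.mkContinuous K fun x => ?_, ?_, ?_⟩
  · rw [Real.norm_eq_abs, abs_le]
    have := hβK (-x)
    rw [map_neg, norm_neg] at this
    exact ⟨by linarith, hβK x⟩
  · intro v s hQ
    exact (hβ v).trans (hN _ _ ⟨0, 0, s, P0, by simpa using hQ, by simp⟩)
  · intro v r hP
    have := (hβ (-v)).trans (hN (-v) _ ⟨v, r, 0, hP, by simpa using QK 0, rfl⟩)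
    rw [map_neg] at this
    change α v - β v ≤ r
    linarith

/-- Proposition 2.  If `f : X → ℝ ∪ {±∞}`, `u ∈ X` with `f u = c ∈ ℝ` and
`g : X → ℝ` is Lipschitz continuous, then `∂(f+g)(u) ⊆ ∂f(u) + ∂g(u)`.  If moreover `g` is of
class `C¹`, then `∂(f+g)(u) = ∂f(u) + ∂g(u)` and `∂g(u) = {g'(u)}`. -/
theorem subdiff_add_subset_of_lipschitz (f : X → EReal) (g : X → ℝ) (u : X) (c : ℝ)
    (hc : f u = (c : EReal)) (hg : ∃ K : NNReal, LipschitzWith K g) :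
    subdiff (fun x => f x + ((g x : ℝ) : EReal)) u (c + g u) ⊆
      subdiff f u c + subdiff (fun x => ((g x : ℝ) : EReal)) u (g u) ∧
    (ContDiff ℝ 1 g →
      subdiff (fun x => f x + ((g x : ℝ) : EReal)) u (c + g u) =
        subdiff f u c + subdiff (fun x => ((g x : ℝ) : EReal)) u (g u) ∧
      subdiff (fun x => ((g x : ℝ) : EReal)) u (g u) = {fderiv ℝ g u}) := by
  obtain ⟨K, hg⟩ := hg
  have hsub : subdiff (fun x => f x + ((g x : ℝ) : EReal)) u (c + g u) ⊆
      subdiff f u c + subdiff (fun x => ((g x : ℝ) : EReal)) u (g u) := by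
    intro α hα
    rw [mem_subdiff_iff] at hα
    obtain ⟨β, h1, h2⟩ := sandwich (P := InP f u c)
      (Q := InP (fun x => ((g x : ℝ) : EReal)) u (g u)) α K (InP.zero f u c)
      (fun _ _ _ _ => InP.add) (fun _ _ _ => InP.smul) (fun _ _ _ _ => InP.add)
      (fun _ _ _ => InP.smul) (fun v => InP.lip hg v)
      (fun v r s hP hQ => hα v (r + s) (InP.sum hg hP hQ))
    exact Set.mem_add.2 ⟨α - β, mem_subdiff_iff.2 h2, β, mem_subdiff_iff.2 h1,
      sub_add_cancel α β⟩
  refine ⟨hsub, fun hC => ?_⟩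
  have hst : HasStrictFDerivAt g (fderiv ℝ g u) u :=
    hC.contDiffAt.hasStrictFDerivAt one_ne_zero
  have hsing : subdiff (fun x => ((g x : ℝ) : EReal)) u (g u) = {fderiv ℝ g u} := by
    refine Set.eq_singleton_iff_unique_mem.2 ⟨?_, ?_⟩
    · exact mem_subdiff_iff.2 fun v r h => le_of_InP hg hst.hasFDerivAt h
    · intro β hβ
      rw [mem_subdiff_iff] at hβ
      ext v
      refine le_antisymm (hβ v _ (InP.c1 hst v)) ?_
      have := hβ (-v) _ (InP.c1 hst (-v))
      rw [map_neg, map_neg] at this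
      linarith
  refine ⟨Set.Subset.antisymm hsub ?_, hsing⟩
  rw [hsing]
  intro α hα
  obtain ⟨β, hβ, γ, hγ, rfl⟩ := Set.mem_add.1 hα
  rw [Set.mem_singleton_iff] at hγ
  subst hγ
  rw [mem_subdiff_iff] at hβ ⊢
  intro v r h
  have hneg : LipschitzWith K (fun x => - g x) := hg.neg
  have h1 := InP.sum hneg h (InP.c1 (g := fun x => - g x) hst.neg v)
  have e1 : (fun x => f x + ((g x : ℝ) : EReal) + ((- g x : ℝ) : EReal)) = f := by
    funext x
    rw [add_assoc, ← EReal.coe_add, add_neg_cancel, EReal.coe_zero, add_zero]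
  rw [e1, add_neg_cancel_right] at h1
  have h2 := hβ v _ h1
  simp only [ContinuousLinearMap.neg_apply] at h2
  rw [ContinuousLinearMap.add_apply]
  linarith
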